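/- Let E be a lattice effect algebra and define x·y := ((x'∧y)⊕y')' for all x,y ∈ E. Then for all a, b ∈ E: a·(b·a') = 0 and (b·a')·a = 0 (i.e., the identity (NG4) holds in (E;·,',0,1)). -/

import Mathlib

/-- An effect algebra: a partial algebra (E;⊕,',0,1). The partial operation ⊕ is
modeled by a definedness predicate `D` together with a total function `add` whose
value is only meaningful on defined pairs. -/
structure EffectAlgebra (E : Type*) where
  /-- definedness of `x ⊕ y` -/
  D : E → E → Prop
  /-- the value of `x ⊕ y` (meaningful only when `D x y`) -/
  add : E → E → E
  zero : E
  one : E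
  /-- the complement `x'` -/
  compl : E → E
  /-- (E1) commutativity -/
  E1 : ∀ x y, D x y → D y x ∧ add x y = add y x
  /-- (E2) associativity -/
  E2 : ∀ x y z, D x y → D (add x y) z →
    D y z ∧ D x (add y z) ∧ add (add x y) z = add x (add y z)
  /-- (E3) existence of the complement -/
  E3a : ∀ x, D x (compl x)
  E3b : ∀ x, add x (compl x) = one
  /-- (E3) uniqueness of the complement -/
  E3c : ∀ x y, D x y → add x y = one → y = compl x
  /-- (E4) -/
  E4 : ∀ x, D x one → x = zero

/-- The induced order of an effect algebra: `a ≤ b` iff `a ⊕ c = b` for some `c`. -/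
def EffectAlgebra.le {E : Type*} (A : EffectAlgebra E) (a b : E) : Prop :=
  ∃ c, A.D a c ∧ A.add a c = b

/-- A lattice effect algebra: an effect algebra whose induced order is a lattice,
with meet `inf` and join `sup`. -/
structure LatticeEffectAlgebra (E : Type*) extends EffectAlgebra E where
  inf : E → E → E
  sup : E → E → E
  inf_le_left : ∀ a b, toEffectAlgebra.le (inf a b) a
  inf_le_right : ∀ a b, toEffectAlgebra.le (inf a b) b
  le_inf : ∀ a b c, toEffectAlgebra.le c a → toEffectAlgebra.le c b →
    toEffectAlgebra.le c (inf a b)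
  le_sup_left : ∀ a b, toEffectAlgebra.le a (sup a b)
  le_sup_right : ∀ a b, toEffectAlgebra.le b (sup a b)
  sup_le : ∀ a b c, toEffectAlgebra.le a c → toEffectAlgebra.le b c →
    toEffectAlgebra.le (sup a b) c

/-- The total operation `x·y := ((x'∧y)⊕y')'` on a lattice effect algebra
(well defined since `x'∧y ≤ y`). -/
def LatticeEffectAlgebra.prod {E : Type*} (A : LatticeEffectAlgebra E) (x y : E) : E :=
  A.compl (A.add (A.inf (A.compl x) y) (A.compl y))

/-!
Call `x` and `y` orthogonal when `x ⊕ y` is defined, equivalently when `x ≤ y'`. If `x` and `y` are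
orthogonal then `x' ∧ y = y`, so `x·y = (y ⊕ y')' = 0`. On the other hand `x·y ≤ y` always, so
`b·a' ≤ a'`, which says that `b·a'` is orthogonal to `a`; orthogonality being symmetric, both
products in (NG4) vanish.
-/

namespace EffectAlgebra

variable {E : Type*} (A : EffectAlgebra E) {x y z : E}

theorem D_symm (h : A.D x y) : A.D y x :=
  (A.E1 x y h).1

protected theorem add_comm (h : A.D x y) : A.add x y = A.add y x :=
  (A.E1 x y h).2

theorem D_compl_self (x : E) : A.D (A.compl x) x :=
  A.D_symm (A.E3a x)

theorem compl_add_self (x : E) : A.add (A.compl x) x = A.one :=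
  (A.add_comm (A.D_compl_self x)).trans (A.E3b x)

protected theorem compl_compl (x : E) : A.compl (A.compl x) = x :=
  (A.E3c _ _ (A.D_compl_self x) (A.compl_add_self x)).symm

theorem compl_one : A.compl A.one = A.zero :=
  A.E4 _ (A.D_compl_self A.one)

theorem D_one_zero : A.D A.one A.zero :=
  A.compl_one ▸ A.E3a A.one

theorem one_add_zero : A.add A.one A.zero = A.one :=
  A.compl_one ▸ A.E3b A.one

theorem D_compl_add (h : A.D x y) : A.D y (A.compl (A.add x y)) :=
  (A.E2 _ _ _ h (A.E3a _)).1

theorem add_compl_add (h : A.D x y) : A.add y (A.compl (A.add x y)) = A.compl x := by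
  obtain ⟨-, hD, hassoc⟩ := A.E2 _ _ _ h (A.E3a _)
  exact A.E3c _ _ hD (hassoc.symm.trans (A.E3b _))

theorem compl_add_compl_add (h : A.D x y) : A.compl (A.add x (A.compl (A.add x y))) = y := by
  rw [A.add_comm h, A.add_compl_add (A.D_symm h), A.compl_compl]

protected theorem add_left_cancel (hxy : A.D x y) (hxz : A.D x z)
    (h : A.add x y = A.add x z) : y = z := by
  rw [← A.compl_add_compl_add hxy, h, A.compl_add_compl_add hxz]

theorem D_zero (x : E) : A.D x A.zero := by
  refine (A.E2 _ _ _ (A.D_compl_self x) ?_).1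
  rw [A.compl_add_self]
  exact A.D_one_zero

protected theorem add_zero (x : E) : A.add x A.zero = x := by
  have hD : A.D (A.add (A.compl x) x) A.zero := A.D_zero _
  obtain ⟨-, hD', hassoc⟩ := A.E2 _ _ _ (A.D_compl_self x) hD
  refine A.add_left_cancel hD' (A.D_compl_self x) ?_
  rw [← hassoc, A.compl_add_self, A.one_add_zero]

theorem right_eq_zero_of_add_eq_zero (hD : A.D x y) (h : A.add x y = A.zero) : y = A.zero :=
  A.E4 _ (A.E2 _ _ A.one hD (h ▸ A.D_symm A.D_one_zero)).1

protected theorem le_refl (x : E) : A.le x x :=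
  ⟨A.zero, A.D_zero x, A.add_zero x⟩

protected theorem le_antisymm (hxy : A.le x y) (hyx : A.le y x) : x = y := by
  obtain ⟨c, hc, rfl⟩ := hxy
  obtain ⟨d, hd, h⟩ := hyx
  obtain ⟨hcd, hxcd, hassoc⟩ := A.E2 _ _ _ hc hd
  have hcd_zero : A.add c d = A.zero :=
    A.add_left_cancel hxcd (A.D_zero x) (by rw [← hassoc, h, A.add_zero])
  have hd_zero : d = A.zero := A.right_eq_zero_of_add_eq_zero hcd hcd_zero
  rw [hd_zero, A.add_zero] at h
  exact h.symm

theorem D_iff_le_compl : A.D x y ↔ A.le x (A.compl y) := by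
  constructor
  · intro h
    exact ⟨_, A.D_compl_add (A.D_symm h), A.add_compl_add (A.D_symm h)⟩
  · rintro ⟨c, hxc, hc⟩
    refine (A.E2 c x y (A.D_symm hxc) ?_).1
    rw [← A.add_comm hxc, hc]
    exact A.D_compl_self y

end EffectAlgebra

namespace LatticeEffectAlgebra

variable {E : Type*} (A : LatticeEffectAlgebra E) {x y : E}

theorem inf_eq_right (h : A.le y x) : A.inf x y = y :=
  A.le_antisymm (A.inf_le_right x y) (A.le_inf x y y h (A.le_refl y))

theorem D_inf_compl (x y : E) : A.D (A.inf x y) (A.compl y) := by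
  rw [A.D_iff_le_compl, A.compl_compl]
  exact A.inf_le_right x y

theorem prod_le_right (x y : E) : A.le (A.prod x y) y := by
  have h : A.D (A.compl y) (A.prod x y) := A.D_compl_add (A.D_inf_compl (A.compl x) y)
  simpa only [A.compl_compl] using A.D_iff_le_compl.mp (A.D_symm h)

theorem prod_eq_zero_of_D (h : A.D x y) : A.prod x y = A.zero := by
  have hyx : A.le y (A.compl x) := A.D_iff_le_compl.mp (A.D_symm h)
  rw [prod, A.inf_eq_right hyx, A.E3b, A.compl_one]

end LatticeEffectAlgebra

/-- (NG4) holds in `(E;·,',0,1)` for a lattice effect algebra `E` with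
`x·y := ((x'∧y)⊕y')'`: `a·(b·a') = 0 = (b·a')·a`. -/
theorem ng4_holds {E : Type*} (A : LatticeEffectAlgebra E) (a b : E) :
    A.prod a (A.prod b (A.compl a)) = A.zero ∧
    A.prod (A.prod b (A.compl a)) a = A.zero := by
  have h : A.D (A.prod b (A.compl a)) a := A.D_iff_le_compl.mpr (A.prod_le_right b (A.compl a))
  exact ⟨A.prod_eq_zero_of_D (A.D_symm h), A.prod_eq_zero_of_D h⟩
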